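/- Let 1 ≤ p ≤ q < ∞ and let X₁, …, X_n, Y be Banach spaces. Every continuous n-linear map T : X₁ × ⋯ × X_n → Y which is (p,p)-semi-integral is (q,q)-semi-integral. -/

import Mathlib

open scoped BigOperators

/-- A continuous `n`-linear map `T : X₁ × ⋯ × X_n → Y` is `(q,p)`-semi-integral if there is
`C ≥ 0` with `(∑ⱼ ‖T(xⱼ¹,…,xⱼⁿ)‖^q)^{1/q} ≤ C (sup_{φᵢ ∈ B_{Xᵢ*}} ∑ⱼ |φ₁(xⱼ¹)⋯φₙ(xⱼⁿ)|^p)^{1/p}`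
for all finite families. -/
def IsSemiIntegral {𝕜 : Type*} [RCLike 𝕜] {n : ℕ} {X : Fin n → Type*}
    [∀ i, NormedAddCommGroup (X i)] [∀ i, NormedSpace 𝕜 (X i)]
    {Y : Type*} [NormedAddCommGroup Y] [NormedSpace 𝕜 Y]
    (q p : ℝ) (T : ContinuousMultilinearMap 𝕜 X Y) : Prop :=
  ∃ C : ℝ, 0 ≤ C ∧ ∀ (m : ℕ) (x : Fin m → ∀ i, X i),
    (∑ j, ‖T (x j)‖ ^ q) ^ (1 / q) ≤
      C * (⨆ φ : ∀ i, {φ : X i →L[𝕜] 𝕜 // ‖φ‖ ≤ 1},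
        ∑ j, (∏ i, ‖(φ i).1 (x j i)‖) ^ p) ^ (1 / p)

/-!
A map is `(s, q)`-semi-integral if it is `(r, p)`-semi-integral and
`1 / p - 1 / q = 1 / r - 1 / s = 1 / t`: apply the `(r, p)`-inequality to the family obtained from
`x` by multiplying one coordinate of each `x j` by `‖T (x j)‖ ^ (s / t)`. The left-hand side becomes
`(∑ j, ‖T (x j)‖ ^ s) ^ (1 / r)`, while Hölder's inequality bounds the weak `ℓ^p` norm on the right
by `(∑ j, ‖T (x j)‖ ^ s) ^ (1 / t)` times the weak `ℓ^q` norm of `x`. Dividing leaves the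
`(s, q)`-inequality with the same constant. For `r = p` this gives `s = q`.
-/

/-- The weak `ℓ^p` norm of a finite family `x` of points of a product of normed spaces: the
supremum, over all choices of functionals `φᵢ` in the dual unit balls, of the `ℓ^p` norm of
`j ↦ ∏ᵢ ‖φᵢ (x j i)‖`. It bounds the values of semi-integral maps. The `1 / p`-th power is taken
outside the supremum, as in `IsSemiIntegral`. -/
noncomputable def weakLpNorm (𝕜 : Type*) [NontriviallyNormedField 𝕜] {ι κ : Type*} [Fintype ι]
    [Fintype κ] {X : ι → Type*} [∀ i, SeminormedAddCommGroup (X i)] [∀ i, NormedSpace 𝕜 (X i)]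
    (p : ℝ) (x : κ → ∀ i, X i) : ℝ :=
  (⨆ φ : ∀ i, {φ : X i →L[𝕜] 𝕜 // ‖φ‖ ≤ 1}, ∑ j, (∏ i, ‖(φ i).1 (x j i)‖) ^ p) ^ (1 / p)

section WeakLpNorm

variable {𝕜 : Type*} [NontriviallyNormedField 𝕜] {ι κ : Type*} [Fintype ι] [Fintype κ]
  {X : ι → Type*} [∀ i, SeminormedAddCommGroup (X i)] [∀ i, NormedSpace 𝕜 (X i)]
  {p q t B : ℝ} {x : κ → ∀ i, X i}

lemma bddAbove_range_sum_prod_norm_apply_rpow (hp : 0 ≤ p) (x : κ → ∀ i, X i) :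
    BddAbove (Set.range fun φ : ∀ i, {φ : X i →L[𝕜] 𝕜 // ‖φ‖ ≤ 1} ↦
      ∑ j, (∏ i, ‖(φ i).1 (x j i)‖) ^ p) := by
  refine ⟨∑ j, (∏ i, ‖x j i‖) ^ p, Set.forall_mem_range.2 fun φ ↦ ?_⟩
  gcongr with j _ i
  simpa only [one_mul] using (φ i).1.le_of_opNorm_le (φ i).2 (x j i)

lemma weakLpNorm_nonneg : 0 ≤ weakLpNorm 𝕜 p x :=
  Real.rpow_nonneg (Real.iSup_nonneg fun _ ↦ by positivity) _

lemma sum_prod_norm_apply_rpow_le_weakLpNorm (hp : 0 ≤ p)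
    (φ : ∀ i, {φ : X i →L[𝕜] 𝕜 // ‖φ‖ ≤ 1}) (x : κ → ∀ i, X i) :
    (∑ j, (∏ i, ‖(φ i).1 (x j i)‖) ^ p) ^ (1 / p) ≤ weakLpNorm 𝕜 p x :=
  Real.rpow_le_rpow (by positivity)
    (le_ciSup (bddAbove_range_sum_prod_norm_apply_rpow hp x) φ) (by positivity)

lemma weakLpNorm_le (hp : 0 < p) (hB : 0 ≤ B)
    (h : ∀ φ : ∀ i, {φ : X i →L[𝕜] 𝕜 // ‖φ‖ ≤ 1},
      (∑ j, (∏ i, ‖(φ i).1 (x j i)‖) ^ p) ^ (1 / p) ≤ B) :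
    weakLpNorm 𝕜 p x ≤ B := by
  rw [weakLpNorm, one_div, Real.rpow_inv_le_iff_of_pos
    (Real.iSup_nonneg fun _ ↦ by positivity) hB hp]
  refine Real.iSup_le (fun φ ↦ ?_) (by positivity)
  rw [← Real.rpow_inv_le_iff_of_pos (by positivity) hB hp, ← one_div]
  exact h φ

lemma weakLpNorm_of_isEmpty [IsEmpty ι] :
    weakLpNorm 𝕜 p x = (Fintype.card κ : ℝ) ^ (1 / p) := by
  simp [weakLpNorm]

lemma weakLpNorm_smul_le (h : t.HolderTriple q p) (c : κ → ι → 𝕜) (x : κ → ∀ i, X i) :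
    weakLpNorm 𝕜 p (fun j i ↦ c j i • x j i) ≤
      (∑ j, (∏ i, ‖c j i‖) ^ t) ^ (1 / t) * weakLpNorm 𝕜 q x := by
  refine weakLpNorm_le h.pos' (mul_nonneg (by positivity) weakLpNorm_nonneg) fun φ ↦ ?_
  calc (∑ j, (∏ i, ‖(φ i).1 (c j i • x j i)‖) ^ p) ^ (1 / p)
      = (∑ j, ((∏ i, ‖c j i‖) * ∏ i, ‖(φ i).1 (x j i)‖) ^ p) ^ (1 / p) := by
        simp only [map_smul, norm_smul, Finset.prod_mul_distrib]
    _ ≤ (∑ j, (∏ i, ‖c j i‖) ^ t) ^ (1 / t) *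
          (∑ j, (∏ i, ‖(φ i).1 (x j i)‖) ^ q) ^ (1 / q) := by
        simpa only [tsum_fintype] using Real.Lr_le_Lp_mul_Lq_tsum_of_nonneg h
          (f := fun j ↦ ∏ i, ‖c j i‖) (g := fun j ↦ ∏ i, ‖(φ i).1 (x j i)‖)
          (fun _ ↦ by positivity) (fun _ ↦ by positivity) .of_finite .of_finite
    _ ≤ (∑ j, (∏ i, ‖c j i‖) ^ t) ^ (1 / t) * weakLpNorm 𝕜 q x := by
        gcongr
        exact sum_prod_norm_apply_rpow_le_weakLpNorm h.symm.nonneg φ x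

end WeakLpNorm

lemma rpow_one_div_le_of_holderTriple {r s t S B : ℝ} (h : t.HolderTriple s r) (hS : 0 ≤ S)
    (hB : 0 ≤ B) (hSB : S ^ (1 / r) ≤ S ^ (1 / t) * B) : S ^ (1 / s) ≤ B := by
  obtain rfl | hS := hS.eq_or_lt
  · rwa [Real.zero_rpow h.symm.one_div_ne_zero]
  · rw [h.one_div_eq, Real.rpow_add hS] at hSB
    exact le_of_mul_le_mul_left hSB (by positivity)

namespace IsSemiIntegral

variable {𝕜 : Type*} [RCLike 𝕜] {n : ℕ} {X : Fin n → Type*}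
  [∀ i, NormedAddCommGroup (X i)] [∀ i, NormedSpace 𝕜 (X i)]
  {Y : Type*} [NormedAddCommGroup Y] [NormedSpace 𝕜 Y]
  {p q r s t : ℝ} {T : ContinuousMultilinearMap 𝕜 X Y}

lemma iff_le_weakLpNorm : IsSemiIntegral q p T ↔
    ∃ C : ℝ, 0 ≤ C ∧ ∀ (m : ℕ) (x : Fin m → ∀ i, X i),
      (∑ j, ‖T (x j)‖ ^ q) ^ (1 / q) ≤ C * weakLpNorm 𝕜 p x :=
  Iff.rfl

lemma of_isEmpty [IsEmpty (Fin n)] (hq : 0 < q) (hqs : q ≤ s)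
    (T : ContinuousMultilinearMap 𝕜 X Y) : IsSemiIntegral s q T := by
  have hs : 0 < s := hq.trans_le hqs
  refine iff_le_weakLpNorm.2 ⟨‖T 0‖, norm_nonneg _, fun m x ↦ ?_⟩
  calc (∑ j, ‖T (x j)‖ ^ s) ^ (1 / s)
      = (m * ‖T 0‖ ^ s) ^ (1 / s) := by
        simp only [Subsingleton.elim (x _) 0, Finset.sum_const, Finset.card_univ,
          Fintype.card_fin, nsmul_eq_mul]
    _ = ‖T 0‖ * (m : ℝ) ^ (1 / s) := by
        rw [Real.mul_rpow (by positivity) (by positivity), one_div,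
          Real.rpow_rpow_inv (norm_nonneg _) hs.ne', mul_comm]
    _ ≤ ‖T 0‖ * (m : ℝ) ^ (1 / q) := by
        gcongr ‖T 0‖ * ?_
        obtain rfl | hm := m.eq_zero_or_pos
        · rw [Nat.cast_zero, Real.zero_rpow (by positivity), Real.zero_rpow (by positivity)]
        · gcongr
          exact_mod_cast hm
    _ = ‖T 0‖ * weakLpNorm 𝕜 q x := by rw [weakLpNorm_of_isEmpty, Fintype.card_fin]

lemma of_holderTriple [NeZero n] (hqp : t.HolderTriple q p) (hsr : t.HolderTriple s r)
    (hT : IsSemiIntegral r p T) : IsSemiIntegral s q T := by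
  obtain ⟨C, hC, hCT⟩ := iff_le_weakLpNorm.1 hT
  refine iff_le_weakLpNorm.2 ⟨C, hC, fun m x ↦ rpow_one_div_le_of_holderTriple hsr
    (by positivity) (mul_nonneg hC weakLpNorm_nonneg) ?_⟩
  let w (j : Fin m) : ℝ := ‖T (x j)‖ ^ (s / t)
  let c (j : Fin m) : Fin n → 𝕜 := Pi.mulSingle 0 (w j : 𝕜)
  have hc (j) : ∏ i, ‖c j i‖ = w j := by
    rw [← norm_prod, Fintype.prod_pi_mulSingle', RCLike.norm_ofReal, abs_of_nonneg (by positivity)]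
  have hw (j) : w j ^ t = ‖T (x j)‖ ^ s := by
    rw [← Real.rpow_mul (norm_nonneg _), div_mul_cancel₀ _ hsr.ne_zero]
  have hTc (j) : ‖T fun i ↦ c j i • x j i‖ ^ r = ‖T (x j)‖ ^ s := by
    have hsr_eq : s / t + 1 = s / r := by
      rw [div_eq_mul_inv s r, hsr.inv_eq, mul_add, ← div_eq_mul_inv,
        mul_inv_cancel₀ hsr.symm.ne_zero]
    rw [T.map_smul_univ, norm_smul, norm_prod, hc, ← Real.rpow_add_one' (norm_nonneg _)
      (add_pos (div_pos hsr.symm.pos hsr.pos) one_pos).ne', hsr_eq,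
      ← Real.rpow_mul (norm_nonneg _), div_mul_cancel₀ _ hsr.ne_zero']
  calc (∑ j, ‖T (x j)‖ ^ s) ^ (1 / r)
      = (∑ j, ‖T fun i ↦ c j i • x j i‖ ^ r) ^ (1 / r) := by simp only [hTc]
    _ ≤ C * weakLpNorm 𝕜 p (fun j i ↦ c j i • x j i) := hCT m _
    _ ≤ C * ((∑ j, (∏ i, ‖c j i‖) ^ t) ^ (1 / t) * weakLpNorm 𝕜 q x) := by
        gcongr
        exact weakLpNorm_smul_le hqp c x
    _ = (∑ j, ‖T (x j)‖ ^ s) ^ (1 / t) * (C * weakLpNorm 𝕜 q x) := by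
        simp only [hc, hw]
        ring

end IsSemiIntegral

theorem stmt4_general {𝕜 : Type*} [RCLike 𝕜] {n : ℕ} {X : Fin n → Type*}
    [∀ i, NormedAddCommGroup (X i)] [∀ i, NormedSpace 𝕜 (X i)]
    {Y : Type*} [NormedAddCommGroup Y] [NormedSpace 𝕜 Y]
    {p q r s : ℝ} (hp : 0 < p) (hpq : p ≤ q) (hpr : p ≤ r) (hs : 0 < s)
    (h : p⁻¹ - q⁻¹ = r⁻¹ - s⁻¹) {T : ContinuousMultilinearMap 𝕜 X Y}
    (hT : IsSemiIntegral r p T) :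
    IsSemiIntegral s q T := by
  have hq : 0 < q := hp.trans_le hpq
  obtain rfl | hn := eq_zero_or_neZero n
  · have hqs : q ≤ s := by
      have hrp : r⁻¹ ≤ p⁻¹ := inv_anti₀ hp hpr
      exact (inv_le_inv₀ hs hq).1 (by linarith)
    exact .of_isEmpty hq hqs T
  obtain rfl | hlt := hpq.eq_or_lt
  · obtain rfl : r = s := inv_injective (by linarith)
    exact hT
  have ht : 0 < (p⁻¹ - q⁻¹)⁻¹ := inv_pos.2 (sub_pos.2 (inv_strictAnti₀ hp hlt))
  have hqp : (p⁻¹ - q⁻¹)⁻¹.HolderTriple q p := ⟨by rw [inv_inv, sub_add_cancel], ht, hq⟩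
  have hsr : (p⁻¹ - q⁻¹)⁻¹.HolderTriple s r := ⟨by rw [inv_inv, h, sub_add_cancel], ht, hs⟩
  exact hT.of_holderTriple hqp hsr

/-- If `1 ≤ p ≤ q < ∞` and `X₁, …, X_n, Y` are Banach spaces, every
continuous `n`-linear `(p,p)`-semi-integral map is `(q,q)`-semi-integral. -/
theorem stmt4 {𝕜 : Type*} [RCLike 𝕜] {n : ℕ} {X : Fin n → Type*}
    [∀ i, NormedAddCommGroup (X i)] [∀ i, NormedSpace 𝕜 (X i)]
    [∀ i, CompleteSpace (X i)]
    {Y : Type*} [NormedAddCommGroup Y] [NormedSpace 𝕜 Y] [CompleteSpace Y]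
    (p q : ℝ) (hp : 1 ≤ p) (hpq : p ≤ q)
    (T : ContinuousMultilinearMap 𝕜 X Y)
    (hT : IsSemiIntegral p p T) :
    IsSemiIntegral q q T :=
  stmt4_general (zero_lt_one.trans_le hp) hpq le_rfl (zero_lt_one.trans_le (hp.trans hpq)) rfl hT
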